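/- arXiv:math/0605680 — 2 statements merged into one kernel-verified Lean document; each statement's English description precedes it below -/
import Mathlib

section
/- In the setting where End_ℂ(M) = ρ(A) for a finite-dimensional simple module M over an H-graded algebra A with quantum torus operators T₁,...,T_r, and M = N ⊗ (⊕_{p∈H} V^p) is the isotypic decomposition, the eigenspace of End_ℂ(M) with eigenvalue h(η_j) under conjugation by T_j (for all j simultaneously) equals Σ_{a∈ℤ^r} T^a ⊗ (⊕_{p∈H} Hom_ℂ(V^p, V^{p+h+γ(a)})), where γ: ℤ^r → H is the homomorphism defined by γ(a)(η^b) = Π_{i,j} q_{ij}^{a_i b_j}. -/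
open DirectSum TensorProduct

/-- The monomial `S^a = S₁^{a₁} ⋯ S_r^{a_r}`. -/
noncomputable def Sprod {N : Type*} [AddCommGroup N] [Module ℂ N]
    {r : ℕ} (S : Fin r → N ≃ₗ[ℂ] N) (a : Fin r → ℤ) : N ≃ₗ[ℂ] N :=
  (List.ofFn fun i => S i ^ a i).prod

/-- The quantum-torus generator `t_j` acting on `M = ⊕_{p∈H} N ⊗ V^p` by
`S j ⊗ p(η_j)·id` on the `p`-component. -/
noncomputable def torusOp {Hhat : Type*} [CommGroup Hhat] [DecidableEq (Hhat →* ℂˣ)]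
    {N : Type*} [AddCommGroup N] [Module ℂ N]
    (V : (Hhat →* ℂˣ) → Type*) [∀ p, AddCommGroup (V p)] [∀ p, Module ℂ (V p)]
    {r : ℕ} (η : Fin r → Hhat) (S : Fin r → N ≃ₗ[ℂ] N) (j : Fin r) :
    (⨁ p : Hhat →* ℂˣ, N ⊗[ℂ] V p) →ₗ[ℂ] ⨁ p : Hhat →* ℂˣ, N ⊗[ℂ] V p :=
  DirectSum.toModule ℂ (Hhat →* ℂˣ) _ fun p =>
    (DirectSum.lof ℂ (Hhat →* ℂˣ) (fun p => N ⊗[ℂ] V p) p).comp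
      (TensorProduct.map (S j : N →ₗ[ℂ] N) ((p (η j) : ℂ) • LinearMap.id))

/-- The operator `T^a ⊗ (⊕_p f_p)` on `M = ⊕_{p∈H} N ⊗ V^p`, sending the
`p`-component to the `p·h·γ(a)`-component via `S^a ⊗ f_p`, where
`f_p : V^p → V^{p·h·γ(a)}`. -/
noncomputable def homogOp {Hhat : Type*} [CommGroup Hhat] [DecidableEq (Hhat →* ℂˣ)]
    {N : Type*} [AddCommGroup N] [Module ℂ N]
    (V : (Hhat →* ℂˣ) → Type*) [∀ p, AddCommGroup (V p)] [∀ p, Module ℂ (V p)]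
    {r : ℕ} (S : Fin r → N ≃ₗ[ℂ] N)
    (γ : (Fin r → ℤ) → (Hhat →* ℂˣ)) (h : Hhat →* ℂˣ) (a : Fin r → ℤ)
    (f : ∀ p : Hhat →* ℂˣ, V p →ₗ[ℂ] V (p * h * γ a)) :
    (⨁ p : Hhat →* ℂˣ, N ⊗[ℂ] V p) →ₗ[ℂ] ⨁ p : Hhat →* ℂˣ, N ⊗[ℂ] V p :=
  DirectSum.toModule ℂ (Hhat →* ℂˣ) _ fun p =>
    (DirectSum.lof ℂ (Hhat →* ℂˣ) (fun p => N ⊗[ℂ] V p) (p * h * γ a)).comp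
      (TensorProduct.map ((Sprod S a : N ≃ₗ[ℂ] N) : N →ₗ[ℂ] N) (f p))

/-!
By Burnside's theorem and the torus relations, some monomials `S^{a_k}` form a basis of `End N`.
Hence each block `N ⊗ V^p → N ⊗ V^s` of an operator `X` is uniquely `∑ k, S^{a_k} ⊗ g_k`. As
`S^{a_k} S_j = γ(a_k)(η_j) S_j S^{a_k}`, conjugation by `T_j` multiplies the `k`-th term by
`(s p⁻¹ γ(a_k)⁻¹)(η_j)`, so the term has weight `h` exactly when `s = p h γ(a_k)`. Collecting the
terms of all blocks by weight decomposes `X`.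
-/

theorem mul_prod_ofFn_zpow_of_commute {G : Type*} [Group G] {r : ℕ} {s : Fin r → G}
    (hs : ∀ i j, Commute (s i) (s j)) (j : Fin r) (a : Fin r → ℤ) :
    s j * (List.ofFn fun i => s i ^ a i).prod =
      (List.ofFn fun i => s i ^ (a + Pi.single j 1 : Fin r → ℤ) i).prod := by
  induction r with
  | zero => exact j.elim0
  | succ r ih =>
    simp only [List.ofFn_succ, List.prod_cons, Pi.add_apply]
    cases j using Fin.cases with
    | zero =>
      simp only [Pi.single_eq_same, Pi.single_eq_of_ne (Fin.succ_ne_zero _), add_zero]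
      rw [← mul_assoc, ← zpow_one_add, add_comm 1]
    | succ k =>
      have hsingle (i : Fin r) : (Pi.single k.succ 1 : Fin (r + 1) → ℤ) i.succ =
          (Pi.single k 1 : Fin r → ℤ) i := by
        simp only [Pi.single_apply, Fin.succ_inj]
      rw [← mul_assoc, ((hs k.succ 0).zpow_right _).eq, mul_assoc,
        Pi.single_eq_of_ne (Fin.succ_ne_zero k).symm, add_zero]
      simp only [hsingle]
      exact congrArg _ (ih (s := fun i => s i.succ) (fun _ _ => hs _ _) k fun i => a i.succ)

theorem semiconjBy_mul_prod_ofFn_zpow {G C : Type*} [Group G] [CommGroup C] {φ : C →* G}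
    (hφ : ∀ c g, Commute (φ c) g) {r : ℕ} {g : G} {s : Fin r → G} {c : Fin r → C}
    (h : ∀ i, SemiconjBy g (φ (c i) * s i) (s i)) (a : Fin r → ℤ) :
    SemiconjBy g (φ (∏ i, c i ^ a i) * (List.ofFn fun i => s i ^ a i).prod)
      (List.ofFn fun i => s i ^ a i).prod := by
  induction r with
  | zero => simp
  | succ r ih =>
    have hhead : SemiconjBy g (φ (c 0 ^ a 0) * s 0 ^ a 0) (s 0 ^ a 0) := by
      rw [map_zpow, ← (hφ _ _).mul_zpow]
      exact (h 0).zpow_right _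
    have hprod := hhead.mul_right (ih (fun i => h i.succ) fun i => a i.succ)
    rwa [(hφ _ _).symm.mul_mul_mul_comm, ← map_mul, ← Fin.prod_univ_succ fun i => c i ^ a i,
      ← List.prod_cons, ← List.ofFn_succ (f := fun i => s i ^ a i)] at hprod

/-- The joint eigenspace for conjugation by the elements `u j`, with eigenvalues `χ j`. The
condition `u j * x * (u j)⁻¹ = χ j • x` is written without the inverse. -/
def conjEigenspace {K A ι : Type*} [CommSemiring K] [Semiring A] [Algebra K A] (u : ι → A)
    (χ : ι → K) : Submodule K A where
  carrier := {x | ∀ j, u j * x = χ j • (x * u j)}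
  add_mem' hx hy j := by rw [mul_add, hx j, hy j, add_mul, smul_add]
  zero_mem' j := by simp
  smul_mem' c x hx j := by rw [mul_smul_comm, hx j, smul_mul_assoc, smul_comm]

/-- **Burnside's theorem** on matrix algebras. -/
theorem adjoin_eq_top_of_forall_invariant {K N : Type*} [Field K] [IsAlgClosed K]
    [AddCommGroup N] [Module K N] [FiniteDimensional K N] [Nontrivial N]
    {s : Set (Module.End K N)}
    (hs : ∀ W : Submodule K N, (∀ f ∈ s, ∀ u ∈ W, f u ∈ W) → W = ⊥ ∨ W = ⊤) :
    Algebra.adjoin K s = ⊤ := by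
  let A := Algebra.adjoin K s
  have hsimple : IsSimpleModule A N := by
    refine isSimpleModule_iff _ _ |>.mpr { eq_bot_or_eq_top := fun W => ?_ }
    simpa using hs (W.restrictScalars K) fun f hf u hu =>
      W.smul_mem (⟨f, Algebra.subset_adjoin hf⟩ : A) hu
  refine Algebra.eq_top_iff.mpr fun f => ?_
  -- By Schur's lemma `End_A N` consists of scalars, so the density theorem applies to every `f`.
  have hschur (g : Module.End A N) (x : N) : f (g • x) = g • f x := by
    obtain ⟨c, rfl⟩ := (IsSimpleModule.algebraMap_end_bijective_of_isAlgClosed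
      (A := A) (V := N) K).2 g
    simp
  let F : Module.End (Module.End A N) N := { f with map_smul' := hschur }
  obtain ⟨b, hb⟩ := (Module.finite_def (R := K) (M := N)).mp inferInstance
  obtain ⟨a, ha⟩ := jacobson_density (R := A) F b
  have hfa : f = a := LinearMap.ext_on hb ha
  exact hfa ▸ a.2

section TensorHom

variable {R N N' V V' : Type*} [CommSemiring R] [AddCommMonoid N] [Module R N]
  [AddCommMonoid N'] [Module R N'] [AddCommMonoid V] [Module R V] [AddCommMonoid V'] [Module R V']
  [Module.Free R N] [Module.Finite R N] [Module.Free R N'] [Module.Finite R N']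

variable (R N V N' V') in
theorem homTensorHomMap_bijective :
    Function.Bijective (homTensorHomMap (.id R) N V N' V') := by
  classical
  let b := Module.Free.chooseBasis R N
  let b' := Module.Free.chooseBasis R N'
  let coeff i j : (N ⊗[R] V →ₗ[R] N' ⊗[R] V') →ₗ[R] V →ₗ[R] V' :=
    LinearMap.lcomp R V' (TensorProduct.mk R N V (b j)) ∘ₗ
      LinearMap.llcomp R _ _ _ (TensorProduct.lid R V' ∘ₗ (b'.coord i).rTensor V')
  have hcoeff_apply i j Y (v : V) : coeff i j Y v =
      TensorProduct.lid R V' ((b'.coord i).rTensor V' (Y (b j ⊗ₜ v))) := rfl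
  let inv : (N ⊗[R] V →ₗ[R] N' ⊗[R] V') →ₗ[R] (N →ₗ[R] N') ⊗[R] (V →ₗ[R] V') :=
    ∑ i, ∑ j, TensorProduct.mk R _ _ ((b.coord j).smulRight (b' i)) ∘ₗ coeff i j
  have hleft : inv ∘ₗ homTensorHomMap (.id R) N V N' V' = .id := by
    refine TensorProduct.ext' fun φ g => ?_
    have hcoeff i j : coeff i j (TensorProduct.map φ g) = b'.coord i (φ (b j)) • g :=
      LinearMap.ext fun v => by simp [hcoeff_apply]
    have hφ : ∑ i, ∑ j, b'.coord i (φ (b j)) • (b.coord j).smulRight (b' i) = φ :=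
      b.ext fun j => by simp [Finsupp.single_apply]
    conv_rhs => rw [LinearMap.id_apply, ← hφ]
    simp [inv, hcoeff, sum_tmul, smul_tmul]
  have hright : homTensorHomMap (.id R) N V N' V' ∘ₗ inv = .id := by
    have hexpand (x : N' ⊗[R] V') :
        ∑ i, b' i ⊗ₜ TensorProduct.lid R V' ((b'.coord i).rTensor V' x) = x := by
      have h := (equivFinsuppOfBasisLeft b').symm_apply_apply x
      rw [equivFinsuppOfBasisLeft_symm_apply, Finsupp.sum_fintype _ _ fun _ => tmul_zero _ _] at h
      simpa only [equivFinsuppOfBasisLeft_apply] using h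
    refine LinearMap.ext fun Y => TensorProduct.ext <| b.ext fun j => LinearMap.ext fun v => ?_
    simp [inv, Finsupp.single_apply, hcoeff_apply, ite_smul, ite_tmul, hexpand]
  exact Function.bijective_iff_has_inverse.mpr
    ⟨inv, DFunLike.congr_fun hleft, DFunLike.congr_fun hright⟩

theorem existsUnique_eq_sum_map {κ : Type*} [Fintype κ] (B : Module.Basis κ R (N →ₗ[R] N'))
    (Y : N ⊗[R] V →ₗ[R] N' ⊗[R] V') :
    ∃! g : κ → V →ₗ[R] V', Y = ∑ k, TensorProduct.map (B k) (g k) := by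
  classical
  let e := (Finsupp.linearEquivFunOnFinite R (V →ₗ[R] V') κ).symm ≪≫ₗ
    (equivFinsuppOfBasisLeft B).symm ≪≫ₗ .ofBijective _ (homTensorHomMap_bijective R N N' V V')
  have he (g : κ → V →ₗ[R] V') : e g = ∑ k, TensorProduct.map (B k) (g k) := by
    simp [e, equivFinsuppOfBasisLeft_symm_apply, Finsupp.sum_fintype]
  simpa only [he, eq_comm] using e.bijective.existsUnique Y

end TensorHom

section Block

variable {R ι : Type*} [CommSemiring R] [DecidableEq ι] {M : ι → Type*}
  [∀ i, AddCommMonoid (M i)] [∀ i, Module R (M i)]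

/-- The matrix entry `M i → M j` of an endomorphism of a direct sum, as a linear function of the
endomorphism. -/
def block (i j : ι) : Module.End R (⨁ i, M i) →ₗ[R] M i →ₗ[R] M j :=
  LinearMap.lcomp R (M j) (lof R ι M i) ∘ₗ LinearMap.llcomp R _ _ _ (component R ι M j)

theorem block_apply (X : Module.End R (⨁ i, M i)) (i j : ι) (x : M i) :
    block i j X x = X (lof R ι M i x) j := rfl

theorem eq_of_forall_block_eq {X Y : Module.End R (⨁ i, M i)}
    (h : ∀ i j, block i j X = block i j Y) : X = Y :=
  linearMap_ext R fun i => LinearMap.ext fun x => DFinsupp.ext fun j => congr($(h i j) x)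

end Block

theorem commute_toModuleAut {R M : Type*} [CommSemiring R] [AddCommMonoid M] [Module R M] (c : Rˣ)
    (g : M ≃ₗ[R] M) : Commute (DistribMulAction.toModuleAut R M c) g :=
  LinearEquiv.ext fun x => (map_smul g (c : R) x).symm

section Monomials

variable {N : Type*} [AddCommGroup N] [Module ℂ N] {r : ℕ} {S : Fin r → N ≃ₗ[ℂ] N}
  {q : Fin r → Fin r → ℂˣ}

theorem Sprod_zero (S : Fin r → N ≃ₗ[ℂ] N) : Sprod S 0 = 1 := by
  simp [Sprod]

theorem mul_eq_toModuleAut_mul (hrel : ∀ i j, ((S i : Module.End ℂ N) * S j) =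
      (q i j : ℂ) • ((S j : Module.End ℂ N) * S i)) (i j : Fin r) :
    S i * S j = DistribMulAction.toModuleAut ℂ N (q i j) * (S j * S i) :=
  LinearEquiv.ext fun x => congr($(hrel i j) x)

theorem Sprod_mul (hrel : ∀ i j, ((S i : Module.End ℂ N) * S j) =
      (q i j : ℂ) • ((S j : Module.End ℂ N) * S i)) (a : Fin r → ℤ) (j : Fin r) :
    (Sprod S a : Module.End ℂ N) * S j =
      ((∏ i, q i j ^ a i : ℂˣ) : ℂ) • ((S j : Module.End ℂ N) * Sprod S a) := by
  have hsemi (i : Fin r) :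
      SemiconjBy (S j) (DistribMulAction.toModuleAut ℂ N (q i j) * S i) (S i) := by
    rw [SemiconjBy, mul_eq_toModuleAut_mul hrel i j, ← mul_assoc, ← mul_assoc,
      (commute_toModuleAut (q i j) (S j)).eq]
  have hprod := (semiconjBy_mul_prod_ofFn_zpow (φ := DistribMulAction.toModuleAut ℂ N)
    commute_toModuleAut hsemi a).eq
  rw [← mul_assoc, ← (commute_toModuleAut (∏ i, q i j ^ a i) (S j)).eq, mul_assoc] at hprod
  exact LinearMap.ext fun x => congr($hprod.symm x)

theorem exists_mul_Sprod_eq_smul (hrel : ∀ i j, ((S i : Module.End ℂ N) * S j) =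
      (q i j : ℂ) • ((S j : Module.End ℂ N) * S i)) (j : Fin r) (a : Fin r → ℤ) :
    ∃ d : ℂ, (S j : Module.End ℂ N) * (Sprod S a : N ≃ₗ[ℂ] N) =
      d • (Sprod S (a + Pi.single j 1) : Module.End ℂ N) := by
  -- Modulo the central subgroup `Z` of scalars the `S i` commute.
  let Z := (DistribMulAction.toModuleAut (S := ℂˣ) ℂ N).range
  have : Z.Normal := ⟨by
    rintro _ ⟨c, rfl⟩ g
    exact ⟨c, by rw [← (commute_toModuleAut c g).eq, mul_inv_cancel_right]⟩⟩
  have hcomm (i j : Fin r) : Commute (S i : (N ≃ₗ[ℂ] N) ⧸ Z) (S j) := by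
    refine Eq.symm (QuotientGroup.eq.mpr ⟨q i j, ?_⟩)
    change _ = (S j * S i)⁻¹ * (S i * S j)
    rw [mul_eq_toModuleAut_mul hrel i j, (commute_toModuleAut (q i j) (S j * S i)).eq,
      inv_mul_cancel_left]
  have hmk (b : Fin r → ℤ) : ((Sprod S b : N ≃ₗ[ℂ] N) : (N ≃ₗ[ℂ] N) ⧸ Z) =
      (List.ofFn fun i => (S i : (N ≃ₗ[ℂ] N) ⧸ Z) ^ b i).prod :=
    (map_list_prod (QuotientGroup.mk' Z) _).trans (by rw [List.map_ofFn]; rfl)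
  have hquot : ((Sprod S (a + Pi.single j 1) : N ≃ₗ[ℂ] N) : (N ≃ₗ[ℂ] N) ⧸ Z) =
      (S j * Sprod S a : N ≃ₗ[ℂ] N) := by
    rw [QuotientGroup.mk_mul, hmk, hmk, mul_prod_ofFn_zpow_of_commute hcomm]
  obtain ⟨c, hc⟩ := QuotientGroup.eq.mp hquot
  have hSprod : S j * Sprod S a =
      DistribMulAction.toModuleAut ℂ N c * Sprod S (a + Pi.single j 1) := by
    rw [(commute_toModuleAut c _).eq, hc, mul_inv_cancel_left]
  exact ⟨c, LinearMap.ext fun x => congr($hSprod x)⟩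

theorem span_range_Sprod_eq_top [FiniteDimensional ℂ N] [Nontrivial N]
    (hrel : ∀ i j, ((S i : Module.End ℂ N) * S j) = (q i j : ℂ) • ((S j : Module.End ℂ N) * S i))
    (hN : ∀ W : Submodule ℂ N, (∀ i, ∀ u ∈ W, S i u ∈ W) → W = ⊥ ∨ W = ⊤) :
    Submodule.span ℂ (Set.range fun a => (Sprod S a : Module.End ℂ N)) = ⊤ := by
  have hadjoin : Algebra.adjoin ℂ (Set.range fun i => (S i : Module.End ℂ N)) = ⊤ :=
    adjoin_eq_top_of_forall_invariant fun W hW => hN W fun i => hW _ ⟨i, rfl⟩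
  have hclosure : ∀ x ∈ Submonoid.closure (Set.range fun i => (S i : Module.End ℂ N)),
      ∃ (d : ℂ) (a : Fin r → ℤ), x = d • (Sprod S a : Module.End ℂ N) := by
    intro x hx
    induction hx using Submonoid.closure_induction_left with
    | one => exact ⟨1, 0, by rw [Sprod_zero, one_smul]; rfl⟩
    | mul_left _ hs _ _ ih =>
      obtain ⟨⟨j, rfl⟩, d, a, rfl⟩ := And.intro hs ih
      obtain ⟨d', hd'⟩ := exists_mul_Sprod_eq_smul hrel j a
      exact ⟨d * d', _, by rw [mul_smul_comm, hd', smul_smul]⟩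
  rw [eq_top_iff, ← Algebra.top_toSubmodule, ← hadjoin, Algebra.adjoin_eq_span, Submodule.span_le]
  intro x hx
  obtain ⟨d, a, rfl⟩ := hclosure x hx
  exact Submodule.smul_mem _ d (Submodule.subset_span ⟨a, rfl⟩)

theorem exists_basis_eq_Sprod [FiniteDimensional ℂ N] [Nontrivial N]
    (hrel : ∀ i j, ((S i : Module.End ℂ N) * S j) = (q i j : ℂ) • ((S j : Module.End ℂ N) * S i))
    (hN : ∀ W : Submodule ℂ N, (∀ i, ∀ u ∈ W, S i u ∈ W) → W = ⊥ ∨ W = ⊤) :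
    ∃ (κ : Type) (_ : Finite κ) (a : κ → Fin r → ℤ) (B : Module.Basis κ ℂ (N →ₗ[ℂ] N)),
      ∀ k, B k = Sprod S (a k) := by
  obtain ⟨κ, a, -, hspan, hindep⟩ :=
    exists_linearIndependent' ℂ fun a => (Sprod S a : Module.End ℂ N)
  rw [span_range_Sprod_eq_top hrel hN] at hspan
  let B := Module.Basis.mk hindep hspan.ge
  exact ⟨κ, Module.Finite.finite_basis B, a, B, Module.Basis.mk_apply hindep hspan.ge⟩

end Monomials

section Weights

variable {Hhat : Type*} [CommGroup Hhat] [DecidableEq (Hhat →* ℂˣ)]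
  {N : Type*} [AddCommGroup N] [Module ℂ N]
  {V : (Hhat →* ℂˣ) → Type*} [∀ p, AddCommGroup (V p)] [∀ p, Module ℂ (V p)]
  {r : ℕ} {η : Fin r → Hhat} {S : Fin r → N ≃ₗ[ℂ] N} {γ : (Fin r → ℤ) → (Hhat →* ℂˣ)}

theorem torusOp_lof (p : Hhat →* ℂˣ) (j : Fin r) (x : N ⊗[ℂ] V p) :
    torusOp V η S j (lof ℂ _ _ p x) =
      (p (η j) : ℂ) • lof ℂ _ (fun p => N ⊗[ℂ] V p) p ((S j : N →ₗ[ℂ] N).rTensor (V p) x) := by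
  rw [torusOp, toModule_lof, TensorProduct.map_smul_right, LinearMap.comp_apply]
  exact map_smul (lof ℂ _ (fun p => N ⊗[ℂ] V p) p) _ _

theorem torusOp_eq_lmap (j : Fin r) :
    torusOp V η S j = lmap fun p => (p (η j) : ℂ) • (S j : N →ₗ[ℂ] N).rTensor (V p) :=
  linearMap_ext ℂ fun p => LinearMap.ext fun x => by
    simp only [LinearMap.comp_apply, torusOp_lof, lmap_lof, LinearMap.smul_apply, map_smul]

theorem mem_conjEigenspace_torusOp_iff {χ : Fin r → ℂ}
    {X : Module.End ℂ (⨁ p : Hhat →* ℂˣ, N ⊗[ℂ] V p)} :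
    X ∈ conjEigenspace (torusOp V η S) χ ↔ ∀ j p s,
      (s (η j) : ℂ) • ((S j : N →ₗ[ℂ] N).rTensor (V s) ∘ₗ block p s X) =
        (χ j * p (η j)) • (block p s X ∘ₗ (S j : N →ₗ[ℂ] N).rTensor (V p)) := by
  have hleft j p s : block p s (torusOp V η S j * X) =
      (s (η j) : ℂ) • ((S j : N →ₗ[ℂ] N).rTensor (V s) ∘ₗ block p s X) := by
    rw [torusOp_eq_lmap]
    rfl
  have hright j p s : block p s (X * torusOp V η S j) =
      (p (η j) : ℂ) • (block p s X ∘ₗ (S j : N →ₗ[ℂ] N).rTensor (V p)) := by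
    refine LinearMap.ext fun x => ?_
    rw [block_apply, Module.End.mul_apply, torusOp_lof, map_smul]
    rfl
  simp only [← hleft, mul_smul, ← hright, ← map_smul]
  exact ⟨fun hX j p s => congrArg (block p s) (hX j), fun hX j => eq_of_forall_block_eq (hX j)⟩

theorem homogOp_lof (h : Hhat →* ℂˣ) (a : Fin r → ℤ) (f : ∀ p, V p →ₗ[ℂ] V (p * h * γ a))
    (p : Hhat →* ℂˣ) (x : N ⊗[ℂ] V p) :
    homogOp V S γ h a f (lof ℂ _ _ p x) =
      lof ℂ _ (fun p => N ⊗[ℂ] V p) (p * h * γ a)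
        (TensorProduct.map (Sprod S a : N →ₗ[ℂ] N) (f p) x) := by
  rw [homogOp, toModule_lof, LinearMap.comp_apply]

theorem homogOp_mem_conjEigenspace
    (hcomm : ∀ a j, (Sprod S a : Module.End ℂ N) * S j = (γ a (η j) : ℂ) • (S j * Sprod S a))
    (h : Hhat →* ℂˣ) (a : Fin r → ℤ) (f : ∀ p, V p →ₗ[ℂ] V (p * h * γ a)) :
    homogOp V S γ h a f ∈ conjEigenspace (torusOp V η S) fun j => (h (η j) : ℂ) := by
  intro j
  refine linearMap_ext ℂ fun p => TensorProduct.ext' fun n v => ?_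
  have hn : Sprod S a (S j n) = (γ a (η j) : ℂ) • S j (Sprod S a n) := congr($(hcomm a j) n)
  calc torusOp V η S j (homogOp V S γ h a f (lof ℂ _ _ p (n ⊗ₜ v)))
      = ((p * h * γ a) (η j) : ℂ) • lof ℂ _ (fun p => N ⊗[ℂ] V p) (p * h * γ a)
          (S j (Sprod S a n) ⊗ₜ f p v) := by
        rw [homogOp_lof, torusOp_lof]
        rfl
    _ = (h (η j) : ℂ) • (p (η j) : ℂ) • lof ℂ _ (fun p => N ⊗[ℂ] V p) (p * h * γ a)
          (Sprod S a (S j n) ⊗ₜ f p v) := by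
        rw [hn, ← smul_tmul', map_smul, smul_smul, smul_smul, MonoidHom.mul_apply,
          MonoidHom.mul_apply, Units.val_mul, Units.val_mul, mul_comm (p (η j) : ℂ)]
    _ = (h (η j) : ℂ) • homogOp V S γ h a f (torusOp V η S j (lof ℂ _ _ p (n ⊗ₜ v))) := by
        rw [torusOp_lof, map_smul, homogOp_lof]
        rfl

theorem block_homogOp (S : Fin r → N ≃ₗ[ℂ] N) (h : Hhat →* ℂˣ) (a : Fin r → ℤ)
    (g : ∀ p s, V p →ₗ[ℂ] V s) (p s : Hhat →* ℂˣ) :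
    block p s (homogOp V S γ h a fun p => g p (p * h * γ a)) =
      if p * h * γ a = s then TensorProduct.map (Sprod S a : N →ₗ[ℂ] N) (g p s) else 0 := by
  refine LinearMap.ext fun x => ?_
  rw [block_apply, homogOp_lof]
  split_ifs with hs
  · subst hs
    exact lof_apply ℂ (M := fun p => N ⊗[ℂ] V p) _ _
  · exact of_eq_of_ne _ _ _ (Ne.symm hs)

variable [FiniteDimensional ℂ N] {κ : Type*} {a : κ → Fin r → ℤ}
  {B : Module.Basis κ ℂ (N →ₗ[ℂ] N)}

theorem eq_of_mem_conjEigenspace_of_coeff_ne_zero [Fintype κ]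
    (hgen : Subgroup.closure (Set.range η) = ⊤)
    (hcomm : ∀ a j, (Sprod S a : Module.End ℂ N) * S j = (γ a (η j) : ℂ) • (S j * Sprod S a))
    (hB : ∀ k, B k = Sprod S (a k)) {h : Hhat →* ℂˣ}
    {X : Module.End ℂ (⨁ p : Hhat →* ℂˣ, N ⊗[ℂ] V p)}
    (hX : X ∈ conjEigenspace (torusOp V η S) fun j => (h (η j) : ℂ)) {p s : Hhat →* ℂˣ}
    {g : κ → V p →ₗ[ℂ] V s} (hg : block p s X = ∑ k, TensorProduct.map (B k) (g k))
    {k : κ} (hk : g k ≠ 0) :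
    p * h * γ (a k) = s := by
  refine MonoidHom.eq_of_eqOn_dense hgen ?_
  rintro _ ⟨j, rfl⟩
  have hterm k : TensorProduct.map (B k) (g k) ∘ₗ (S j : N →ₗ[ℂ] N).rTensor (V p) =
      (S j : N →ₗ[ℂ] N).rTensor (V s) ∘ₗ
        TensorProduct.map (B k) ((γ (a k) (η j) : ℂ) • g k) := by
    rw [LinearMap.map_comp_rTensor, LinearMap.rTensor_comp_map, hB, TensorProduct.map_smul_right,
      ← TensorProduct.map_smul_left]
    exact congrArg (TensorProduct.map · (g k)) (hcomm (a k) j)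
  have hcomp : block p s X ∘ₗ (S j : N →ₗ[ℂ] N).rTensor (V p) =
      (S j : N →ₗ[ℂ] N).rTensor (V s) ∘ₗ
        ∑ k, TensorProduct.map (B k) ((γ (a k) (η j) : ℂ) • g k) := by
    refine LinearMap.ext fun x => ?_
    simp only [hg, LinearMap.comp_apply, LinearMap.sum_apply, map_sum]
    exact Finset.sum_congr rfl fun k _ => congr($(hterm k) x)
  have hcancel : ∑ k, TensorProduct.map (B k) ((s (η j) : ℂ) • g k) =
      ∑ k, TensorProduct.map (B k) (((p * h * γ (a k)) (η j) : ℂ) • g k) := by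
    refine (LinearMap.cancel_left ((S j).rTensor (V s)).injective).mp ?_
    have hXj := mem_conjEigenspace_torusOp_iff.mp hX j p s
    rw [hcomp, hg, ← LinearMap.comp_smul, ← LinearMap.comp_smul, Finset.smul_sum,
      Finset.smul_sum] at hXj
    simpa only [LinearEquiv.coe_rTensor, ← TensorProduct.map_smul_right, smul_smul,
      MonoidHom.mul_apply, Units.val_mul, mul_comm (h (η j) : ℂ)] using hXj
  have hcoeff := congrFun ((existsUnique_eq_sum_map B _).unique rfl hcancel) k
  exact Units.ext (smul_left_injective ℂ hk hcoeff).symm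

theorem exists_block_eq_sum_map [Fintype κ] (hB : ∀ k, B k = Sprod S (a k))
    (X : Module.End ℂ (⨁ p : Hhat →* ℂˣ, N ⊗[ℂ] V p)) :
    ∃ g : ∀ p s, κ → V p →ₗ[ℂ] V s,
      ∀ p s, block p s X = ∑ k, TensorProduct.map (Sprod S (a k) : N →ₗ[ℂ] N) (g p s k) := by
  choose g hg _ using fun p s : Hhat →* ℂˣ => existsUnique_eq_sum_map B (block p s X)
  simp only [hB] at hg
  exact ⟨g, hg⟩

theorem conjEigenspace_torusOp_eq_span [Finite κ]
    (hgen : Subgroup.closure (Set.range η) = ⊤)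
    (hcomm : ∀ a j, (Sprod S a : Module.End ℂ N) * S j = (γ a (η j) : ℂ) • (S j * Sprod S a))
    (hB : ∀ k, B k = Sprod S (a k)) (h : Hhat →* ℂˣ) :
    conjEigenspace (torusOp V η S) (fun j => (h (η j) : ℂ)) =
      Submodule.span ℂ {X | ∃ a f, X = homogOp V S γ h a f} := by
  have := Fintype.ofFinite κ
  refine le_antisymm (fun X hX => ?_) (Submodule.span_le.mpr ?_)
  · obtain ⟨g, hg⟩ := exists_block_eq_sum_map hB X
    have hsum : X = ∑ k, homogOp V S γ h (a k) fun p => g p (p * h * γ (a k)) k := by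
      refine eq_of_forall_block_eq fun p s => ?_
      have hblock k := block_homogOp (γ := γ) S h (a k) (fun p s => g p s k) p s
      simp only [map_sum, hblock, hg]
      refine Finset.sum_congr rfl fun k _ => ?_
      split_ifs with hs
      · rfl
      · have hgk : g p s k = 0 := by_contra fun hgk =>
          hs (eq_of_mem_conjEigenspace_of_coeff_ne_zero hgen hcomm hB hX
            (by simpa only [hB] using hg p s) hgk)
        rw [hgk, TensorProduct.map_zero_right]
    rw [hsum]
    exact Submodule.sum_mem _ fun k _ => Submodule.subset_span ⟨_, _, rfl⟩
  · rintro _ ⟨a, f, rfl⟩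
    exact homogOp_mem_conjEigenspace hcomm h a f

theorem iSup_conjEigenspace_torusOp_eq_top [Finite (Hhat →* ℂˣ)] [Finite κ]
    (hcomm : ∀ a j, (Sprod S a : Module.End ℂ N) * S j = (γ a (η j) : ℂ) • (S j * Sprod S a))
    (hB : ∀ k, B k = Sprod S (a k)) :
    ⨆ h : Hhat →* ℂˣ, conjEigenspace (torusOp V η S) (fun j => (h (η j) : ℂ)) = ⊤ := by
  have := Fintype.ofFinite (Hhat →* ℂˣ)
  have := Fintype.ofFinite κ
  refine Submodule.eq_top_iff'.mpr fun X => ?_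
  obtain ⟨g, hg⟩ := exists_block_eq_sum_map hB X
  have hsum : X = ∑ h, ∑ k, homogOp V S γ h (a k) fun p => g p (p * h * γ (a k)) k := by
    refine eq_of_forall_block_eq fun p s => ?_
    have hblock h k := block_homogOp (γ := γ) S h (a k) (fun p s => g p s k) p s
    simp only [map_sum, hblock, hg]
    rw [Finset.sum_comm]
    refine Finset.sum_congr rfl fun k _ => ?_
    have hbij : Function.Bijective fun h => p * h * γ (a k) :=
      (Group.mulRight_bijective (γ (a k))).comp (Group.mulLeft_bijective p)
    rw [hbij.sum_comp fun t => if t = s then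
        TensorProduct.map (Sprod S (a k) : N →ₗ[ℂ] N) (g p s k) else 0,
      Finset.sum_ite_eq', if_pos (Finset.mem_univ s)]
  rw [hsum]
  exact Submodule.sum_mem _ fun h _ => Submodule.sum_mem _ fun k _ =>
    Submodule.mem_iSup_of_mem h (homogOp_mem_conjEigenspace hcomm h _ _)

end Weights

theorem endomorphism_eigenspace_decomposition_general
    {Hhat : Type*} [CommGroup Hhat] [DecidableEq (Hhat →* ℂˣ)]
    {N : Type*} [AddCommGroup N] [Module ℂ N] [FiniteDimensional ℂ N]
    (V : (Hhat →* ℂˣ) → Type*) [∀ p, AddCommGroup (V p)] [∀ p, Module ℂ (V p)]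
    {r : ℕ} {η : Fin r → Hhat} (hgen : Subgroup.closure (Set.range η) = ⊤)
    {S : Fin r → N ≃ₗ[ℂ] N} {q : Fin r → Fin r → ℂˣ}
    (hrel : ∀ i j, ((S i : Module.End ℂ N) * S j) = (q i j : ℂ) • ((S j : Module.End ℂ N) * S i))
    (hNsimple : Nontrivial N ∧
      ∀ W : Submodule ℂ N, (∀ i, ∀ u ∈ W, S i u ∈ W) → W = ⊥ ∨ W = ⊤)
    {γ : (Fin r → ℤ) → (Hhat →* ℂˣ)}
    (hγdef : ∀ a b : Fin r → ℤ, γ a (∏ i, η i ^ b i) = ∏ i, ∏ j, q i j ^ (a i * b j)) :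
    (∀ h : Hhat →* ℂˣ, conjEigenspace (torusOp V η S) (fun j => (h (η j) : ℂ)) =
      Submodule.span ℂ {X | ∃ a f, X = homogOp V S γ h a f}) ∧
    (Finite (Hhat →* ℂˣ) →
      ⨆ h : Hhat →* ℂˣ, conjEigenspace (torusOp V η S) (fun j => (h (η j) : ℂ)) = ⊤) := by
  obtain ⟨_, hN⟩ := hNsimple
  have hγη a j : γ a (η j) = ∏ i, q i j ^ a i := by
    simpa [Pi.single_apply] using hγdef a (Pi.single j 1)
  have hcomm a j : (Sprod S a : Module.End ℂ N) * S j = (γ a (η j) : ℂ) • (S j * Sprod S a) := by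
    rw [hγη, Sprod_mul hrel]
  obtain ⟨κ, _, a, B, hB⟩ := exists_basis_eq_Sprod hrel hN
  exact ⟨conjEigenspace_torusOp_eq_span hgen hcomm hB,
    fun _ => iSup_conjEigenspace_torusOp_eq_top hcomm hB⟩

/-- Proposition 3.8 (Billig–Lau): let `M = ⊕_{p∈H} N ⊗ V^p` be the isotypic
decomposition of a module over the cyclotomic quantum torus generated by
`T_1, …, T_r` (acting as `S_j ⊗ p(η_j)` on the `p`-component, `N` a simple
torus module), where `H = Hom(Ĥ, ℂ*)` and `γ : ℤ^r → H` is the homomorphism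
`γ(a)(η^b) = ∏ q_{ij}^{a_i b_j}`.  Then `End_ℂ(M)` decomposes into the direct
sum over `h ∈ H` of the simultaneous conjugation eigenspaces with eigenvalues
`h(η_j)`, and the `h`-eigenspace (= `ρ(A_h)`) is exactly
`Σ_{a∈ℤ^r} T^a ⊗ (⊕_{p∈H} Hom_ℂ(V^p, V^{p·h·γ(a)}))`. -/
theorem endomorphism_eigenspace_decomposition
    {Hhat : Type*} [CommGroup Hhat] [Finite Hhat] [DecidableEq (Hhat →* ℂˣ)]
    {N : Type*} [AddCommGroup N] [Module ℂ N] [FiniteDimensional ℂ N]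
    (V : (Hhat →* ℂˣ) → Type*) [∀ p, AddCommGroup (V p)] [∀ p, Module ℂ (V p)]
    [∀ p, FiniteDimensional ℂ (V p)]
    {r : ℕ} (η : Fin r → Hhat) (hgen : Subgroup.closure (Set.range η) = ⊤)
    (S : Fin r → N ≃ₗ[ℂ] N) (q : Fin r → Fin r → ℂˣ)
    (hq1 : ∀ i, q i i = 1) (hqinv : ∀ i j, q i j = (q j i)⁻¹)
    (hqroot : ∀ i j, ∃ n : ℕ, 0 < n ∧ q i j ^ n = 1)
    (hrel : ∀ i j, ((S i : Module.End ℂ N) * S j) =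
        (q i j : ℂ) • ((S j : Module.End ℂ N) * S i))
    (hNsimple : Nontrivial N ∧
      ∀ W : Submodule ℂ N, (∀ i, ∀ u ∈ W, S i u ∈ W) → W = ⊥ ∨ W = ⊤)
    (γ : (Fin r → ℤ) → (Hhat →* ℂˣ))
    (hγadd : ∀ a b : Fin r → ℤ, γ (a + b) = γ a * γ b)
    (hγdef : ∀ a b : Fin r → ℤ, γ a (∏ i, η i ^ b i) = ∏ i, ∏ j, q i j ^ (a i * b j)) :
    (∀ h : Hhat →* ℂˣ,
      {X : (⨁ p : Hhat →* ℂˣ, N ⊗[ℂ] V p) →ₗ[ℂ] ⨁ p : Hhat →* ℂˣ, N ⊗[ℂ] V p |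
          ∀ j, (torusOp V η S j).comp X = (h (η j) : ℂ) • (X.comp (torusOp V η S j))}
        = ↑(Submodule.span ℂ
            {X : (⨁ p : Hhat →* ℂˣ, N ⊗[ℂ] V p) →ₗ[ℂ] ⨁ p : Hhat →* ℂˣ, N ⊗[ℂ] V p |
              ∃ (a : Fin r → ℤ) (f : ∀ p : Hhat →* ℂˣ, V p →ₗ[ℂ] V (p * h * γ a)),
                X = homogOp V S γ h a f})) ∧
    Submodule.span ℂ
      (⋃ h : Hhat →* ℂˣ,
        {X : (⨁ p : Hhat →* ℂˣ, N ⊗[ℂ] V p) →ₗ[ℂ] ⨁ p : Hhat →* ℂˣ, N ⊗[ℂ] V p |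
          ∀ j, (torusOp V η S j).comp X = (h (η j) : ℂ) • (X.comp (torusOp V η S j))})
      = ⊤ := by
  obtain ⟨hspan, htop⟩ :=
    endomorphism_eigenspace_decomposition_general V hgen hrel hNsimple hγdef
  rw [Submodule.iSup_eq_span] at htop
  exact ⟨fun h => congrArg SetLike.coe (hspan h), htop inferInstance⟩
end

section
/- Let M be a finite-dimensional simple module over a ℂ-algebra A, Ĥ a finite abelian group of automorphisms of A with M^η ≅ M for all η ∈ Ĥ, and M = ⊕_{h∈H} N ⊗ V^h the isotypic decomposition with respect to the cyclotomic quantum torus action. For each nonzero n ∈ N, define M_h = Σ_{a∈ℤ^r} T^a(n) ⊗ V^{h+γ(a)}. Then {M_h | h ∈ H} is a thin H-covering of M, and every thin H-covering of M is equivalent to one of this form. In particular, equivalence classes of thin H-coverings are parametrized by one-dimensional subspaces of N. -/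
open DirectSum TensorProduct

/-- The component `M_h = Σ_{a∈ℤ^r} T^a(n) ⊗ V^{h·γ(a)}` of the thin covering
attached to a nonzero vector `n ∈ N`. -/
noncomputable def thinFam {Hhat : Type*} [CommGroup Hhat] [DecidableEq (Hhat →* ℂˣ)]
    {N : Type*} [AddCommGroup N] [Module ℂ N]
    (V : (Hhat →* ℂˣ) → Type*) [∀ p, AddCommGroup (V p)] [∀ p, Module ℂ (V p)]
    {r : ℕ} (S : Fin r → N ≃ₗ[ℂ] N) (γ : (Fin r → ℤ) → (Hhat →* ℂˣ))
    (n : N) (h : Hhat →* ℂˣ) : Submodule ℂ (⨁ p : Hhat →* ℂˣ, N ⊗[ℂ] V p) :=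
  ⨆ a : Fin r → ℤ, LinearMap.range
    ((DirectSum.lof ℂ (Hhat →* ℂˣ) (fun p => N ⊗[ℂ] V p) (h * γ a)).comp
      ((TensorProduct.mk ℂ N (V (h * γ a))) ((Sprod S a) n)))

/-- A covering of the module `(M, ρ)` with respect to the `H`-grading `𝒜`. -/
def IsCoveringRho {Hhat A M : Type*} [CommGroup Hhat] [Ring A] [Algebra ℂ A]
    [AddCommGroup M] [Module ℂ M]
    (𝒜 : (Hhat →* ℂˣ) → Submodule ℂ A) (ρ : A →ₐ[ℂ] Module.End ℂ M)
    (C : (Hhat →* ℂˣ) → Submodule ℂ M) : Prop :=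
  (⨆ h, C h) = ⊤ ∧ ∀ g h : Hhat →* ℂˣ, ∀ a ∈ 𝒜 g, ∀ m ∈ C h, ρ a m ∈ C (g * h)

/-- A thin covering is a minimal covering. -/
def IsThinCoveringRho {Hhat A M : Type*} [CommGroup Hhat] [Ring A] [Algebra ℂ A]
    [AddCommGroup M] [Module ℂ M]
    (𝒜 : (Hhat →* ℂˣ) → Submodule ℂ A) (ρ : A →ₐ[ℂ] Module.End ℂ M)
    (C : (Hhat →* ℂˣ) → Submodule ℂ M) : Prop :=
  IsCoveringRho 𝒜 ρ C ∧
    ∀ D : (Hhat →* ℂˣ) → Submodule ℂ M, IsCoveringRho 𝒜 ρ D →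
      (∃ k : Hhat →* ℂˣ, ∀ h, D (h * k) ≤ C h) → ∃ k : Hhat →* ℂˣ, ∀ h, C (h * k) ≤ D h

/-!
Let `T j` be the operators `torusOp V η S j` on `M = ⨁ p, N ⊗ V p`, and call `X ∈ End M` of weight
`h` when `T j * X * (T j)⁻¹ = h (η j) • X` for all `j`. By Burnside's theorem `ρ` is onto `End M`,
and averaging over the finite group shows that the component of `A` of degree `h` maps onto the
operators of weight `h`; so only the weight spaces of `End M` matter. Applying all operators
`u ⊗ v ↦ f v • Y u ⊗ v'`, with `Y ∈ End N` of some weight, to a nonzero element of a covering shows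
that it contains a translate of the family attached to some `n ≠ 0`. An inclusion between two such
families produces a weight operator taking `n` to `n'`; it is invertible by Schur's lemma, so the
families agree and are minimal. Finally, by Burnside's theorem for `N` and the trace form, every
weight operator on `N` is a multiple of a monomial `Sprod S a`, whose weight is `(γ a)⁻¹`, so these
families are the families `thinFam V S γ n`.
-/

section Irreducible

variable {K M ι : Type*} [Field K] [AddCommGroup M] [Module K M]

/-- A family of operators on a nonzero space without proper nonzero common invariant subspaces. -/
def IsIrreducibleFamily (T : ι → Module.End K M) : Prop :=
  Nontrivial M ∧ ∀ W : Submodule K M, (∀ i, ∀ u ∈ W, T i u ∈ W) → W = ⊥ ∨ W = ⊤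

variable [IsAlgClosed K] [FiniteDimensional K M] {T : ι → Module.End K M}

theorem IsIrreducibleFamily.adjoin_range_eq_top (hT : IsIrreducibleFamily T) :
    Algebra.adjoin K (Set.range T) = ⊤ := by
  set B := Algebra.adjoin K (Set.range T)
  have := hT.1
  have : IsSimpleModule B M := by
    refine (isSimpleModule_iff B M).2 { eq_bot_or_eq_top := fun U => ?_ }
    have hU : ∀ i, ∀ u ∈ U.restrictScalars K, T i u ∈ U.restrictScalars K := fun i u hu =>
      U.smul_mem (⟨T i, Algebra.subset_adjoin (Set.mem_range_self i)⟩ : B) hu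
    simpa using hT.2 (U.restrictScalars K) hU
  have schur := (IsSimpleModule.algebraMap_end_bijective_of_isAlgClosed K (A := B) (V := M)).2
  refine eq_top_iff.2 fun X _ => ?_
  let X' : Module.End (Module.End B M) M :=
    { toFun := X
      map_add' := X.map_add
      map_smul' := fun e m => by
        obtain ⟨c, rfl⟩ := schur e
        exact X.map_smul c m }
  have : Module.Finite (Module.End B M) M :=
    Module.Finite.of_restrictScalars_finite K (Module.End B M) M
  obtain ⟨b, hb⟩ := Module.Finite.toModuleEnd_moduleEnd_surjective (R := B) X'
  have hbX : (b : Module.End K M) = X := LinearMap.ext fun m => congr($hb m)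
  exact hbX ▸ b.2

theorem IsIrreducibleFamily.span_closure_range_eq_top (hT : IsIrreducibleFamily T) :
    Submodule.span K (Submonoid.closure (Set.range T) : Set (Module.End K M)) = ⊤ := by
  rw [← Algebra.adjoin_eq_span, hT.adjoin_range_eq_top, Algebra.top_toSubmodule]

theorem IsIrreducibleFamily.algHom_surjective {A : Type*} [Ring A] [Algebra K A]
    {ρ : A →ₐ[K] Module.End K M} (hρ : IsIrreducibleFamily ρ) : Function.Surjective ρ := by
  have h : Algebra.adjoin K (Set.range ρ) = ρ.range := by
    rw [← AlgHom.coe_range, Algebra.adjoin_eq]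
  rw [← AlgHom.range_eq_top, ← h, hρ.adjoin_range_eq_top]

end Irreducible

section ConjWeightSpace

variable {K M ι : Type*} [CommRing K] [AddCommGroup M] [Module K M]

/-- The joint eigenspace of weight `c` for conjugation by the operators `T j`, the condition
`T j * X * (T j)⁻¹ = c j • X` being stated without the inverse. -/
def conjWeightSpace (T : ι → Module.End K M) (c : ι → Kˣ) : Submodule K (Module.End K M) where
  carrier := {X | ∀ j, T j * X = (c j : K) • (X * T j)}
  add_mem' hX hY j := by rw [mul_add, add_mul, smul_add, hX j, hY j]
  zero_mem' j := by simp
  smul_mem' t X hX j := by rw [mul_smul_comm, smul_mul_assoc, hX j, smul_comm]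

variable {T : ι → Module.End K M} {c d : ι → Kˣ} {X Y : Module.End K M}

theorem apply_of_mem_conjWeightSpace (hX : X ∈ conjWeightSpace T c) (j : ι) (m : M) :
    T j (X m) = (c j : K) • X (T j m) :=
  congr($(hX j) m)

theorem one_mem_conjWeightSpace : (1 : Module.End K M) ∈ conjWeightSpace T 1 := fun j => by simp

theorem mul_mem_conjWeightSpace (hX : X ∈ conjWeightSpace T c) (hY : Y ∈ conjWeightSpace T d) :
    X * Y ∈ conjWeightSpace T (c * d) := fun j => by
  rw [← mul_assoc, hX j, smul_mul_assoc, mul_assoc, hY j, mul_smul_comm, smul_smul, mul_assoc,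
    Pi.mul_apply, Units.val_mul]

theorem symm_mem_conjWeightSpace {e : M ≃ₗ[K] M}
    (he : (e : Module.End K M) ∈ conjWeightSpace T c) :
    (e.symm : Module.End K M) ∈ conjWeightSpace T c⁻¹ := fun j => by
  ext m
  apply e.injective
  have h := apply_of_mem_conjWeightSpace he j (e.symm m)
  simp only [LinearEquiv.coe_coe, LinearEquiv.apply_symm_apply] at h
  simp [h, smul_smul]

theorem list_prod_zpow_mem_conjWeightSpace {r : ℕ} {S : Fin r → M ≃ₗ[K] M} {w : Fin r → ι → Kˣ}
    (hS : ∀ i, (S i : Module.End K M) ∈ conjWeightSpace T (w i)) (a : Fin r → ℤ) :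
    (((List.ofFn fun i => S i ^ a i).prod : M ≃ₗ[K] M) : Module.End K M) ∈
      conjWeightSpace T (∏ i, w i ^ a i) := by
  let G : Subgroup ((M ≃ₗ[K] M) × (ι → Kˣ)) :=
    { carrier := {x | (x.1 : Module.End K M) ∈ conjWeightSpace T x.2}
      one_mem' := one_mem_conjWeightSpace
      mul_mem' := mul_mem_conjWeightSpace
      inv_mem' := symm_mem_conjWeightSpace }
  have hG : (List.ofFn fun i => (S i, w i) ^ a i).prod ∈ G := by
    refine G.list_prod_mem fun x hx => ?_
    obtain ⟨i, rfl⟩ := List.mem_ofFn.1 hx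
    exact G.zpow_mem (hS i) (a i)
  have hprod : (List.ofFn fun i => (S i, w i) ^ a i).prod =
      ((List.ofFn fun i => S i ^ a i).prod, ∏ i, w i ^ a i) := by
    ext1
    · rw [← MonoidHom.coe_fst, map_list_prod, List.map_ofFn]
      rfl
    · rw [← MonoidHom.coe_snd, map_list_prod, List.map_ofFn, List.prod_ofFn]
      rfl
  rwa [hprod] at hG

end ConjWeightSpace

section Schur

variable {K M ι : Type*} [Field K] [AddCommGroup M] [Module K M] [FiniteDimensional K M]
  {T : ι → Module.End K M} {c : ι → Kˣ} {X : Module.End K M}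

theorem IsIrreducibleFamily.exists_linearEquiv_of_mem_conjWeightSpace (hT : IsIrreducibleFamily T)
    (hX : X ∈ conjWeightSpace T c) (hX0 : X ≠ 0) :
    ∃ e : M ≃ₗ[K] M, (e : Module.End K M) = X := by
  have hker : ∀ j, ∀ m ∈ X.ker, T j m ∈ X.ker := fun j m hm => by
    have h := apply_of_mem_conjWeightSpace hX j m
    rw [LinearMap.mem_ker] at hm ⊢
    rw [hm, map_zero] at h
    exact (smul_eq_zero.1 h.symm).resolve_left (c j).ne_zero
  rcases hT.2 X.ker hker with h | h
  · exact ⟨LinearEquiv.ofInjectiveEndo X (LinearMap.ker_eq_bot.1 h), rfl⟩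
  · exact absurd (LinearMap.ker_eq_top.1 h) hX0

theorem IsIrreducibleFamily.exists_smul_one_of_mem_conjWeightSpace_one [IsAlgClosed K]
    (hT : IsIrreducibleFamily T) (hX : X ∈ conjWeightSpace T 1) : ∃ t : K, X = t • 1 := by
  have := hT.1
  obtain ⟨t, ht⟩ := Module.End.exists_eigenvalue X
  have hinv : ∀ j, ∀ m ∈ X.eigenspace t, T j m ∈ X.eigenspace t := fun j m hm => by
    have h := apply_of_mem_conjWeightSpace hX j m
    rw [Module.End.mem_eigenspace_iff] at hm ⊢
    simpa [hm] using h.symm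
  refine ⟨t, LinearMap.ext fun m => ?_⟩
  have htop := (hT.2 _ hinv).resolve_left ht
  exact Module.End.mem_eigenspace_iff.1 (htop ▸ Submodule.mem_top)

theorem IsIrreducibleFamily.exists_eq_smul_of_mem_conjWeightSpace [IsAlgClosed K]
    (hT : IsIrreducibleFamily T) {e : M ≃ₗ[K] M} (he : (e : Module.End K M) ∈ conjWeightSpace T c)
    (hX : X ∈ conjWeightSpace T c) : ∃ t : K, X = t • (e : Module.End K M) := by
  have hXe := mul_mem_conjWeightSpace (symm_mem_conjWeightSpace he) hX
  rw [inv_mul_cancel] at hXe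
  obtain ⟨t, ht⟩ := hT.exists_smul_one_of_mem_conjWeightSpace_one hXe
  exact ⟨t, LinearMap.ext fun m => e.symm_apply_eq.1 congr($ht m) |>.trans (by simp)⟩

end Schur

section Trace

variable {K M ι : Type*} [Field K] [AddCommGroup M] [Module K M]

theorem eq_one_of_mem_conjWeightSpace_of_trace_ne_zero {T : ι → M ≃ₗ[K] M} {c : ι → Kˣ}
    {X : Module.End K M} (hX : X ∈ conjWeightSpace (fun j => (T j : Module.End K M)) c)
    (htr : LinearMap.trace K M X ≠ 0) : c = 1 := by
  ext j
  have hconj : (T j).conj X = (c j : K) • X := by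
    ext m
    simpa using apply_of_mem_conjWeightSpace hX j ((T j).symm m)
  have h := LinearMap.trace_conj' X (T j)
  rw [hconj, map_smul, smul_eq_mul] at h
  exact mul_right_cancel₀ htr (h.trans (one_mul _).symm)

theorem exists_trace_mul_ne_zero [FiniteDimensional K M] {s : Set (Module.End K M)}
    (hs : Submodule.span K s = ⊤) {X : Module.End K M} (hX : X ≠ 0) :
    ∃ Y ∈ s, LinearMap.trace K M (X * Y) ≠ 0 := by
  by_contra! h
  have hle : Submodule.span K s ≤ (LinearMap.trace K M ∘ₗ LinearMap.mulLeft K X).ker :=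
    Submodule.span_le.2 h
  obtain ⟨m, hm⟩ := DFunLike.ne_iff.1 hX
  obtain ⟨f, hf⟩ := Module.Projective.exists_dual_eq_one K hm
  have h0 := hle (hs ▸ Submodule.mem_top : f.smulRight m ∈ _)
  have hX' : X * f.smulRight m = f.smulRight (X m) := by
    ext x; simp
  rw [LinearMap.mem_ker, LinearMap.comp_apply, LinearMap.mulLeft_apply, hX',
    LinearMap.trace_smulRight, hf] at h0
  exact one_ne_zero h0

end Trace

section Torus

variable {N : Type*} [AddCommGroup N] [Module ℂ N] {r : ℕ}

/-- The joint weight spaces of the torus generators `S j` acting on `End N` by conjugation. -/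
abbrev torusWeightSpace (S : Fin r → N ≃ₗ[ℂ] N) (c : Fin r → ℂˣ) : Submodule ℂ (Module.End ℂ N) :=
  conjWeightSpace (fun j => (S j : Module.End ℂ N)) c

variable {S : Fin r → N ≃ₗ[ℂ] N} {q : Fin r → Fin r → ℂˣ}

theorem generator_mem_torusWeightSpace
    (hrel : ∀ i j, (S i : Module.End ℂ N) * S j = (q i j : ℂ) • ((S j : Module.End ℂ N) * S i))
    (i : Fin r) : (S i : Module.End ℂ N) ∈ torusWeightSpace S (q i)⁻¹ :=
  fun j => by simp [hrel i j, smul_smul]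

theorem Sprod_mem_torusWeightSpace
    (hrel : ∀ i j, (S i : Module.End ℂ N) * S j = (q i j : ℂ) • ((S j : Module.End ℂ N) * S i))
    (a : Fin r → ℤ) : (Sprod S a : Module.End ℂ N) ∈ torusWeightSpace S (∏ i, q i ^ a i)⁻¹ := by
  have h := list_prod_zpow_mem_conjWeightSpace (generator_mem_torusWeightSpace hrel) a
  simp only [inv_zpow, Finset.prod_inv_distrib] at h
  exact h

theorem exists_mem_torusWeightSpace_of_mem_closure
    (hrel : ∀ i j, (S i : Module.End ℂ N) * S j = (q i j : ℂ) • ((S j : Module.End ℂ N) * S i))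
    {Z : Module.End ℂ N} (hZ : Z ∈ Submonoid.closure (Set.range fun i => (S i : Module.End ℂ N))) :
    ∃ a : Fin r → ℤ, Z ∈ torusWeightSpace S (∏ i, q i ^ a i)⁻¹ := by
  induction hZ using Submonoid.closure_induction with
  | mem _ hx =>
    obtain ⟨i, rfl⟩ := hx
    exact ⟨Pi.single i 1, by
      simpa [Pi.single_apply, apply_ite] using generator_mem_torusWeightSpace hrel i⟩
  | one => exact ⟨0, by simpa using one_mem_conjWeightSpace⟩
  | mul _ _ _ _ hx hy =>
    obtain ⟨a, ha⟩ := hx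
    obtain ⟨b, hb⟩ := hy
    refine ⟨a + b, ?_⟩
    simpa only [Pi.add_apply, zpow_add, Finset.prod_mul_distrib, mul_inv] using
      mul_mem_conjWeightSpace ha hb

theorem iSup_torusWeightSpace_eq_top [FiniteDimensional ℂ N]
    (hS : IsIrreducibleFamily fun i => (S i : Module.End ℂ N))
    (hrel : ∀ i j, (S i : Module.End ℂ N) * S j = (q i j : ℂ) • ((S j : Module.End ℂ N) * S i)) :
    ⨆ a : Fin r → ℤ, torusWeightSpace S (∏ i, q i ^ a i)⁻¹ = ⊤ := by
  rw [← top_le_iff, ← hS.span_closure_range_eq_top, Submodule.span_le]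
  intro Z hZ
  obtain ⟨a, ha⟩ := exists_mem_torusWeightSpace_of_mem_closure hrel hZ
  exact Submodule.mem_iSup_of_mem a ha

-- The trace pairs `Y` nontrivially with some word `Z` in the generators, so `Y * Z` has weight `1`.
theorem exists_eq_smul_Sprod_of_mem_torusWeightSpace [FiniteDimensional ℂ N]
    (hS : IsIrreducibleFamily fun i => (S i : Module.End ℂ N))
    (hrel : ∀ i j, (S i : Module.End ℂ N) * S j = (q i j : ℂ) • ((S j : Module.End ℂ N) * S i))
    {c : Fin r → ℂˣ} {Y : Module.End ℂ N} (hY : Y ∈ torusWeightSpace S c) (hY0 : Y ≠ 0) :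
    ∃ a : Fin r → ℤ, c = (∏ i, q i ^ a i)⁻¹ ∧ ∃ t : ℂ, Y = t • (Sprod S a : Module.End ℂ N) := by
  obtain ⟨Z, hZ, htr⟩ := exists_trace_mul_ne_zero hS.span_closure_range_eq_top hY0
  obtain ⟨a, ha⟩ := exists_mem_torusWeightSpace_of_mem_closure hrel hZ
  have hYZ := eq_one_of_mem_conjWeightSpace_of_trace_ne_zero (mul_mem_conjWeightSpace hY ha) htr
  have hc : c = (∏ i, q i ^ (-a) i)⁻¹ := by
    simpa using mul_inv_eq_one.1 hYZ
  have hSprod : (Sprod S (-a) : Module.End ℂ N) ∈ torusWeightSpace S c :=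
    hc ▸ Sprod_mem_torusWeightSpace hrel (-a)
  exact ⟨-a, hc, hS.exists_eq_smul_of_mem_conjWeightSpace hSprod hY⟩

variable {G : Type*} [CommGroup G] {η : Fin r → G} {γ : (Fin r → ℤ) → (G →* ℂˣ)}

theorem character_comp_generators
    (hγdef : ∀ a b : Fin r → ℤ, γ a (∏ i, η i ^ b i) = ∏ i, ∏ j, q i j ^ (a i * b j))
    (a : Fin r → ℤ) : ⇑(γ a) ∘ η = ∏ i, q i ^ a i := by
  ext j
  simpa [Pi.single_apply, apply_ite] using congr((($(hγdef a (Pi.single j 1)) : ℂˣ) : ℂ))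

end Torus

section Slices

variable {K P N : Type*} [CommRing K] [AddCommGroup N] [Module K N] [DecidableEq P]
  {V : P → Type*} [∀ p, AddCommGroup (V p)] [∀ p, Module K (V p)]

/-- The embedding `u ↦ u ⊗ v` of `N` into the `p`-component of `⨁ p, N ⊗ V p`. -/
noncomputable def singleTmul (p : P) (v : V p) : N →ₗ[K] ⨁ q, N ⊗[K] V q :=
  lof K P (fun q => N ⊗[K] V q) p ∘ₗ (TensorProduct.mk K N (V p)).flip v

/-- The contraction `⨁ p, N ⊗ V p → N` of the `p`-component against a linear form on `V p`. -/
noncomputable def slice (p : P) (f : Module.Dual K (V p)) : (⨁ q, N ⊗[K] V q) →ₗ[K] N :=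
  TensorProduct.rid K N ∘ₗ f.lTensor N ∘ₗ component K P (fun q => N ⊗[K] V q) p

theorem slice_singleTmul_self (p : P) (f : Module.Dual K (V p)) (v : V p) (u : N) :
    slice p f (singleTmul p v u) = f v • u := by
  simp [slice, singleTmul]

theorem slice_singleTmul_of_ne {p p' : P} (hp : p ≠ p') (f : Module.Dual K (V p')) (v : V p)
    (u : N) : slice p' f (singleTmul p v u) = 0 := by
  simp [slice, singleTmul, component.of, hp]

theorem linearMap_ext_singleTmul {M' : Type*} [AddCommGroup M'] [Module K M']
    {X Y : (⨁ q, N ⊗[K] V q) →ₗ[K] M'} (h : ∀ p v, X ∘ₗ singleTmul p v = Y ∘ₗ singleTmul p v) :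
    X = Y :=
  DirectSum.linearMap_ext K fun p => TensorProduct.ext' fun u v => congr($(h p v) u)

theorem eq_top_of_forall_singleTmul_mem {U : Submodule K (⨁ q, N ⊗[K] V q)}
    (hU : ∀ p v u, singleTmul p v u ∈ U) : U = ⊤ := by
  rw [← U.ker_mkQ, LinearMap.ker_eq_top]
  exact linearMap_ext_singleTmul fun p v => LinearMap.ext fun u => by simpa using hU p v u

theorem mem_of_forall_singleTmul_slice_mem [∀ p, Module.Free K (V p)]
    {U : Submodule K (⨁ q, N ⊗[K] V q)} {m : ⨁ q, N ⊗[K] V q}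
    (hm : ∀ p v f, singleTmul p v (slice p f m) ∈ U) : m ∈ U := by
  classical
  rw [← DirectSum.sum_support_of m]
  refine U.sum_mem fun p _ => ?_
  let b := Module.Free.chooseBasis K (V p)
  rw [← (TensorProduct.equivFinsuppOfBasisRight b).symm_apply_apply (m p),
    TensorProduct.equivFinsuppOfBasisRight_symm_apply, Finsupp.sum, map_sum]
  refine U.sum_mem fun i _ => ?_
  rw [TensorProduct.equivFinsuppOfBasisRight_apply]
  exact hm p (b i) (b.coord i)

omit [DecidableEq P] in
theorem exists_slice_ne_zero [∀ p, Module.Free K (V p)] {m : ⨁ q, N ⊗[K] V q} (hm : m ≠ 0) :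
    ∃ p f, slice p f m ≠ 0 := by
  classical
  by_contra! h
  exact hm <| (Submodule.mem_bot K).1 <| mem_of_forall_singleTmul_slice_mem fun p v f => by simp [h]

theorem exists_dual_apply_eq_one {K P N : Type*} [Field K] [AddCommGroup N] [Module K N]
    {V : P → Type*} [∀ p, AddCommGroup (V p)] [∀ p, Module K (V p)]
    [Nontrivial (⨁ p, N ⊗[K] V p)] : ∃ p, ∃ v : V p, ∃ f : Module.Dual K (V p), f v = 1 := by
  obtain ⟨m, hm⟩ := exists_ne (0 : ⨁ p, N ⊗[K] V p)
  obtain ⟨p, f, hf⟩ := exists_slice_ne_zero hm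
  have hf0 : f ≠ 0 := by
    rintro rfl
    simp [slice] at hf
  obtain ⟨v, hv⟩ := DFunLike.ne_iff.1 hf0
  exact ⟨p, v, (f v)⁻¹ • f, inv_mul_cancel₀ hv⟩

end Slices

section TorusOp

variable {G N : Type*} [CommGroup G] [DecidableEq (G →* ℂˣ)] [AddCommGroup N] [Module ℂ N]
  {V : (G →* ℂˣ) → Type*} [∀ p, AddCommGroup (V p)] [∀ p, Module ℂ (V p)]
  {r : ℕ} {η : Fin r → G} {S : Fin r → N ≃ₗ[ℂ] N}

theorem torusOp_singleTmul (j : Fin r) (p : G →* ℂˣ) (v : V p) (u : N) :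
    torusOp V η S j (singleTmul p v u) = (p (η j) : ℂ) • singleTmul p v (S j u) := by
  simp [torusOp, singleTmul, toModule_lof]

theorem slice_torusOp (j : Fin r) (p : G →* ℂˣ) (f : Module.Dual ℂ (V p))
    (m : ⨁ p, N ⊗[ℂ] V p) :
    slice p f (torusOp V η S j m) = (p (η j) : ℂ) • S j (slice p f m) := by
  suffices h : slice p f ∘ₗ torusOp V η S j = (p (η j) : ℂ) • (S j : N →ₗ[ℂ] N) ∘ₗ slice p f from
    congr($h m)
  refine linearMap_ext_singleTmul fun p' v => LinearMap.ext fun u => ?_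
  simp only [LinearMap.comp_apply, LinearMap.smul_apply, torusOp_singleTmul, map_smul,
    LinearEquiv.coe_coe]
  obtain rfl | hp := eq_or_ne p' p
  · simp only [slice_singleTmul_self, map_smul]
  · simp only [slice_singleTmul_of_ne hp, map_zero, smul_zero]

theorem torusOp_surjective (j : Fin r) : Function.Surjective (torusOp V η S j) := by
  rw [← LinearMap.range_eq_top]
  refine eq_top_of_forall_singleTmul_mem fun p v u => ?_
  refine ⟨(p (η j) : ℂ)⁻¹ • singleTmul p v ((S j).symm u), ?_⟩
  rw [map_smul, torusOp_singleTmul, LinearEquiv.apply_symm_apply,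
    inv_smul_smul₀ (p (η j)).ne_zero]

theorem slice_comp_comp_singleTmul_mem_torusWeightSpace {c : Fin r → ℂˣ}
    {X : Module.End ℂ (⨁ p, N ⊗[ℂ] V p)} (hX : X ∈ conjWeightSpace (torusOp V η S) c)
    (p p' : G →* ℂˣ) (v : V p) (f : Module.Dual ℂ (V p')) :
    slice p' f ∘ₗ X ∘ₗ singleTmul p v ∈ torusWeightSpace S (c * ⇑p ∘ η / ⇑p' ∘ η) := fun j => by
  refine LinearMap.ext fun u => smul_right_injective N (p' (η j)).ne_zero ?_
  have h := congr(slice p' f $(apply_of_mem_conjWeightSpace hX j (singleTmul p v u)))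
  simp only [slice_torusOp, torusOp_singleTmul, map_smul, smul_smul] at h
  simpa [smul_smul, mul_div_cancel₀] using h

theorem singleTmul_comp_comp_slice_mem_conjWeightSpace {c : Fin r → ℂˣ} {Y : Module.End ℂ N}
    (hY : Y ∈ torusWeightSpace S c) (p p' : G →* ℂˣ) (f : Module.Dual ℂ (V p)) (v : V p') :
    singleTmul p' v ∘ₗ Y ∘ₗ slice p f ∈
      conjWeightSpace (torusOp V η S) (c * ⇑p' ∘ η / ⇑p ∘ η) := fun j => by
  refine LinearMap.ext fun m => ?_
  have h := apply_of_mem_conjWeightSpace hY j (slice p f m)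
  simp only [LinearEquiv.coe_coe] at h
  simp [torusOp_singleTmul, slice_torusOp, h, smul_smul, mul_div_cancel₀, mul_comm]

end TorusOp

section WeightFamily

variable {G N : Type*} [CommGroup G] [AddCommGroup N] [Module ℂ N]
  {V : (G →* ℂˣ) → Type*} [∀ p, AddCommGroup (V p)] [∀ p, Module ℂ (V p)]
  {r : ℕ} {η : Fin r → G} {S : Fin r → N ≃ₗ[ℂ] N}

variable (V η S) in
/-- The family attached to `n ∈ N` whose member at `h` consists of the `m` all of whose slices at
`p` are obtained by applying to `n` an operator of weight `h / p`. It agrees with `thinFam` as soon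
as all such operators are multiples of torus monomials. -/
noncomputable def weightFamily (n : N) (h : G →* ℂˣ) : Submodule ℂ (⨁ p, N ⊗[ℂ] V p) :=
  ⨅ p : G →* ℂˣ, ⨅ f : Module.Dual ℂ (V p),
    ((torusWeightSpace S (⇑h ∘ η / ⇑p ∘ η)).map (LinearMap.applyₗ n)).comap (slice p f)

theorem mem_weightFamily {n : N} {h : G →* ℂˣ} {m : ⨁ p, N ⊗[ℂ] V p} :
    m ∈ weightFamily V η S n h ↔
      ∀ (p : G →* ℂˣ) (f : Module.Dual ℂ (V p)),
        ∃ Y ∈ torusWeightSpace S (⇑h ∘ η / ⇑p ∘ η), Y n = slice p f m := by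
  simp [weightFamily]

theorem singleTmul_mem_weightFamily [DecidableEq (G →* ℂˣ)] {h p : G →* ℂˣ} {Y : Module.End ℂ N}
    (hY : Y ∈ torusWeightSpace S (⇑h ∘ η / ⇑p ∘ η)) (v : V p) (n : N) :
    singleTmul p v (Y n) ∈ weightFamily V η S n h := by
  refine mem_weightFamily.2 fun p' f => ?_
  obtain rfl | hp := eq_or_ne p p'
  · exact ⟨f v • Y, Submodule.smul_mem _ _ hY, (slice_singleTmul_self p f v (Y n)).symm⟩
  · exact ⟨0, Submodule.zero_mem _, (slice_singleTmul_of_ne hp f v (Y n)).symm⟩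

theorem weightFamily_le_iff [DecidableEq (G →* ℂˣ)] {n : N} {h : G →* ℂˣ}
    {U : Submodule ℂ (⨁ p, N ⊗[ℂ] V p)} :
    weightFamily V η S n h ≤ U ↔
      ∀ (p : G →* ℂˣ) (v : V p), ∀ Y ∈ torusWeightSpace S (⇑h ∘ η / ⇑p ∘ η),
        singleTmul p v (Y n) ∈ U := by
  refine ⟨fun hU p v Y hY => hU (singleTmul_mem_weightFamily hY v n), fun hU m hm => ?_⟩
  refine mem_of_forall_singleTmul_slice_mem fun p v f => ?_
  obtain ⟨Y, hY, hYn⟩ := mem_weightFamily.1 hm p f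
  exact hYn ▸ hU p v Y hY

theorem apply_mem_weightFamily [DecidableEq (G →* ℂˣ)] {g h : G →* ℂˣ}
    {X : Module.End ℂ (⨁ p, N ⊗[ℂ] V p)}
    (hX : X ∈ conjWeightSpace (torusOp V η S) (⇑g ∘ η)) {n : N} {m : ⨁ p, N ⊗[ℂ] V p}
    (hm : m ∈ weightFamily V η S n h) : X m ∈ weightFamily V η S n (g * h) := by
  suffices hle : weightFamily V η S n h ≤ (weightFamily V η S n (g * h)).comap X from hle hm
  refine weightFamily_le_iff.2 fun p v Y hY => mem_weightFamily.2 fun p' f => ?_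
  have hXY := mul_mem_conjWeightSpace
    (slice_comp_comp_singleTmul_mem_torusWeightSpace hX p p' v f) hY
  have hw : ⇑g ∘ η * ⇑p ∘ η / ⇑p' ∘ η * (⇑h ∘ η / ⇑p ∘ η) = ⇑(g * h) ∘ η / ⇑p' ∘ η := by
    ext j
    simp only [Pi.mul_apply, Pi.div_apply, Function.comp_apply, Units.val_mul,
      Units.val_div_eq_div_val, MonoidHom.mul_apply]
    field_simp
  exact ⟨_, hw ▸ hXY, rfl⟩

theorem iSup_weightFamily_eq_top (hspan : ⨆ χ : G →* ℂˣ, torusWeightSpace S (⇑χ ∘ η) = ⊤) {n : N}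
    (hn : n ≠ 0) : ⨆ h, weightFamily V η S n h = ⊤ := by
  classical
  refine eq_top_of_forall_singleTmul_mem fun p v u => ?_
  obtain ⟨f, hf⟩ := Module.Projective.exists_dual_eq_one ℂ hn
  have hle : ⨆ χ : G →* ℂˣ, torusWeightSpace S (⇑χ ∘ η) ≤
      (⨆ h, weightFamily V η S n h).comap (singleTmul p v ∘ₗ LinearMap.applyₗ n) := by
    refine iSup_le fun χ Y hY => Submodule.mem_iSup_of_mem (χ * p) ?_
    have hw : ⇑(χ * p) ∘ η / ⇑p ∘ η = ⇑χ ∘ η := mul_div_cancel_right (⇑χ ∘ η) (⇑p ∘ η)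
    exact singleTmul_mem_weightFamily (hw ▸ hY) v n
  have hu := hle (hspan ▸ Submodule.mem_top : f.smulRight u ∈ _)
  simpa [hf] using hu

theorem weightFamily_apply_le {c : G →* ℂˣ} {Y : Module.End ℂ N}
    (hY : Y ∈ torusWeightSpace S (⇑c ∘ η)) (n : N) (h : G →* ℂˣ) :
    weightFamily V η S (Y n) h ≤ weightFamily V η S n (h * c) := by
  classical
  refine weightFamily_le_iff.2 fun p v Z hZ => ?_
  have hw : ⇑(h * c) ∘ η / ⇑p ∘ η = ⇑h ∘ η / ⇑p ∘ η * ⇑c ∘ η :=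
    mul_div_right_comm (⇑h ∘ η) (⇑c ∘ η) (⇑p ∘ η)
  exact singleTmul_mem_weightFamily (hw ▸ mul_mem_conjWeightSpace hZ hY) v n

theorem weightFamily_eq_of_span_eq {n n' : N} (hspan : ℂ ∙ n = ℂ ∙ n') (h : G →* ℂˣ) :
    weightFamily V η S n h = weightFamily V η S n' h := by
  classical
  suffices hle : ∀ {n n' : N}, n ∈ ℂ ∙ n' → weightFamily V η S n h ≤ weightFamily V η S n' h from
    le_antisymm (hle (hspan ▸ Submodule.mem_span_singleton_self n))
      (hle (hspan ▸ Submodule.mem_span_singleton_self n'))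
  intro n n' hn
  obtain ⟨t, rfl⟩ := Submodule.mem_span_singleton.1 hn
  refine weightFamily_le_iff.2 fun p v Y hY => ?_
  rw [map_smul, map_smul]
  exact Submodule.smul_mem _ t (singleTmul_mem_weightFamily hY v n')

theorem weightFamily_le_of_forall_le [FiniteDimensional ℂ N] [Nontrivial (⨁ p, N ⊗[ℂ] V p)]
    (hS : IsIrreducibleFamily fun i => (S i : Module.End ℂ N)) {n n' : N} (hn' : n' ≠ 0)
    {c : G →* ℂˣ} (hle : ∀ h, weightFamily V η S n' (h * c) ≤ weightFamily V η S n h)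
    (h : G →* ℂˣ) : weightFamily V η S n h ≤ weightFamily V η S n' (h * c) := by
  classical
  obtain ⟨p, v, f, hfv⟩ := exists_dual_apply_eq_one (K := ℂ) (N := N) (V := V)
  have hmem : singleTmul p v n' ∈ weightFamily V η S n' (p * c⁻¹ * c) := by
    have hw : ⇑(p * c⁻¹ * c) ∘ η / ⇑p ∘ η = 1 := by
      ext j
      simp
    exact singleTmul_mem_weightFamily (Y := 1) (hw ▸ one_mem_conjWeightSpace) v n'
  obtain ⟨Y, hY, hYn⟩ := mem_weightFamily.1 (hle _ hmem) p f
  rw [slice_singleTmul_self, hfv, one_smul] at hYn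
  obtain ⟨e, rfl⟩ := hS.exists_linearEquiv_of_mem_conjWeightSpace hY <| by
    rintro rfl
    exact hn' hYn.symm
  have hn : n = e.symm n' := (e.symm_apply_eq.2 hYn.symm).symm
  have hsymm : (e.symm : Module.End ℂ N) ∈ torusWeightSpace S (⇑c ∘ η) := by
    have hw : (⇑(p * c⁻¹) ∘ η / ⇑p ∘ η)⁻¹ = ⇑c ∘ η := by
      ext j
      simp
    exact hw ▸ symm_mem_conjWeightSpace hY
  exact hn ▸ weightFamily_apply_le hsymm n' h

end WeightFamily

section Covering

variable {G N : Type*} [CommGroup G] [DecidableEq (G →* ℂˣ)] [AddCommGroup N] [Module ℂ N]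
  {V : (G →* ℂˣ) → Type*} [∀ p, AddCommGroup (V p)] [∀ p, Module ℂ (V p)]
  {r : ℕ} {η : Fin r → G} {S : Fin r → N ≃ₗ[ℂ] N}
  {C D : (G →* ℂˣ) → Submodule ℂ (⨁ p, N ⊗[ℂ] V p)} {n : N}

variable (V η S) in
/-- Coverings of `⨁ p, N ⊗ V p` for the algebra of all operators, graded by their weights under
conjugation by the operators `torusOp V η S j`. -/
abbrev IsTorusCovering (C : (G →* ℂˣ) → Submodule ℂ (⨁ p, N ⊗[ℂ] V p)) : Prop :=
  IsCoveringRho (fun h => conjWeightSpace (torusOp V η S) (⇑h ∘ η)) (AlgHom.id ℂ _) C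

variable (V η S) in
/-- Minimal coverings in the sense of `IsTorusCovering`. -/
abbrev IsThinTorusCovering (C : (G →* ℂˣ) → Submodule ℂ (⨁ p, N ⊗[ℂ] V p)) : Prop :=
  IsThinCoveringRho (fun h => conjWeightSpace (torusOp V η S) (⇑h ∘ η)) (AlgHom.id ℂ _) C

theorem isTorusCovering_weightFamily
    (hspan : ⨆ χ : G →* ℂˣ, torusWeightSpace S (⇑χ ∘ η) = ⊤) (hn : n ≠ 0) :
    IsTorusCovering V η S (weightFamily V η S n) :=
  ⟨iSup_weightFamily_eq_top hspan hn, fun _ _ _ hX _ hm => apply_mem_weightFamily hX hm⟩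

-- Some `n = slice p₀ f m` with `m ∈ C h₀` is nonzero, and the operators `singleTmul p v ∘ Y ∘
-- slice p₀ f` send `m` to the vectors spanning the family attached to `n`.
theorem IsTorusCovering.exists_weightFamily_le [Nontrivial (⨁ p, N ⊗[ℂ] V p)]
    (hC : IsTorusCovering V η S C) :
    ∃ n : N, n ≠ 0 ∧ ∃ c : G →* ℂˣ, ∀ h, weightFamily V η S n (h * c) ≤ C h := by
  obtain ⟨h₀, hh₀⟩ : ∃ h₀, C h₀ ≠ ⊥ := by
    by_contra! hbot
    exact bot_ne_top ((iSup_eq_bot.2 hbot).symm.trans hC.1)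
  obtain ⟨m, hm, hm0⟩ := (Submodule.ne_bot_iff _).1 hh₀
  obtain ⟨p₀, f, hf⟩ := exists_slice_ne_zero hm0
  refine ⟨slice p₀ f m, hf, p₀ * h₀⁻¹, fun h => weightFamily_le_iff.2 fun p v Y hY => ?_⟩
  have hw : ⇑(h * (p₀ * h₀⁻¹)) ∘ η / ⇑p ∘ η * ⇑p ∘ η / ⇑p₀ ∘ η = ⇑(h * h₀⁻¹) ∘ η := by
    ext j
    simp only [Pi.mul_apply, Pi.div_apply, Function.comp_apply, Units.val_mul,
      Units.val_div_eq_div_val, Units.val_inv_eq_inv_val, MonoidHom.mul_apply, MonoidHom.inv_apply]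
    field_simp
  have hX : singleTmul p v ∘ₗ Y ∘ₗ slice p₀ f ∈
      conjWeightSpace (torusOp V η S) (⇑(h * h₀⁻¹) ∘ η) :=
    hw ▸ singleTmul_comp_comp_slice_mem_conjWeightSpace hY p₀ p f v
  have hh : h * h₀⁻¹ * h₀ = h := inv_mul_cancel_right (G := G →* ℂˣ) h h₀
  exact (congrArg C hh).le (hC.2 (h * h₀⁻¹) h₀ _ hX m hm)

variable [FiniteDimensional ℂ N] [Nontrivial (⨁ p, N ⊗[ℂ] V p)]

theorem IsTorusCovering.eq_weightFamily_of_forall_le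
    (hS : IsIrreducibleFamily fun i => (S i : Module.End ℂ N)) (hD : IsTorusCovering V η S D)
    {k : G →* ℂˣ} (hle : ∀ h, D (h * k) ≤ weightFamily V η S n h) (h : G →* ℂˣ) :
    D (h * k) = weightFamily V η S n h := by
  obtain ⟨n', hn', c, hc⟩ := hD.exists_weightFamily_le
  have hc' : ∀ h, weightFamily V η S n' (h * (k * c)) ≤ D (h * k) := fun h =>
    mul_assoc h k c ▸ hc (h * k)
  have hrev := weightFamily_le_of_forall_le hS hn' fun h => (hc' h).trans (hle h)
  exact (hle h).antisymm ((hrev h).trans (hc' h))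

theorem isThinTorusCovering_weightFamily
    (hS : IsIrreducibleFamily fun i => (S i : Module.End ℂ N))
    (hspan : ⨆ χ : G →* ℂˣ, torusWeightSpace S (⇑χ ∘ η) = ⊤) (hn : n ≠ 0) :
    IsThinTorusCovering V η S (weightFamily V η S n) := by
  refine ⟨isTorusCovering_weightFamily hspan hn, fun D hD ⟨k, hk⟩ => ⟨k⁻¹, fun h => ?_⟩⟩
  have hh : h * k⁻¹ * k = h := inv_mul_cancel_right (G := G →* ℂˣ) h k
  rw [← IsTorusCovering.eq_weightFamily_of_forall_le hS hD hk, hh]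

theorem IsThinTorusCovering.exists_eq_weightFamily
    (hS : IsIrreducibleFamily fun i => (S i : Module.End ℂ N))
    (hspan : ⨆ χ : G →* ℂˣ, torusWeightSpace S (⇑χ ∘ η) = ⊤) (hC : IsThinTorusCovering V η S C) :
    ∃ n : N, n ≠ 0 ∧ ∃ k : G →* ℂˣ, ∀ h, C (h * k) = weightFamily V η S n h := by
  obtain ⟨n, hn, c, hc⟩ := IsTorusCovering.exists_weightFamily_le hC.1
  obtain ⟨k, hk⟩ := hC.2 _ (isTorusCovering_weightFamily hspan hn) ⟨c, hc⟩
  exact ⟨n, hn, k, IsTorusCovering.eq_weightFamily_of_forall_le hS hC.1 hk⟩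

end Covering

section ThinFam

variable {G N : Type*} [CommGroup G] [AddCommGroup N] [Module ℂ N] [FiniteDimensional ℂ N]
  {r : ℕ} {η : Fin r → G} {S : Fin r → N ≃ₗ[ℂ] N} {q : Fin r → Fin r → ℂˣ}
  {γ : (Fin r → ℤ) → (G →* ℂˣ)}

theorem iSup_torusWeightSpace_character_eq_top
    (hS : IsIrreducibleFamily fun i => (S i : Module.End ℂ N))
    (hrel : ∀ i j, (S i : Module.End ℂ N) * S j = (q i j : ℂ) • ((S j : Module.End ℂ N) * S i))
    (hγ : ∀ a : Fin r → ℤ, ⇑(γ a) ∘ η = ∏ i, q i ^ a i) :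
    ⨆ χ : G →* ℂˣ, torusWeightSpace S (⇑χ ∘ η) = ⊤ := by
  rw [eq_top_iff, ← iSup_torusWeightSpace_eq_top hS hrel]
  refine iSup_le fun a => ?_
  have hw : ⇑(γ a)⁻¹ ∘ η = (∏ i, q i ^ a i)⁻¹ := hγ a ▸ rfl
  exact hw ▸ le_iSup (fun χ : G →* ℂˣ => torusWeightSpace S (⇑χ ∘ η)) (γ a)⁻¹

variable [DecidableEq (G →* ℂˣ)] {V : (G →* ℂˣ) → Type*} [∀ p, AddCommGroup (V p)]
  [∀ p, Module ℂ (V p)]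

theorem thinFam_eq_weightFamily (hgen : Subgroup.closure (Set.range η) = ⊤)
    (hS : IsIrreducibleFamily fun i => (S i : Module.End ℂ N))
    (hrel : ∀ i j, (S i : Module.End ℂ N) * S j = (q i j : ℂ) • ((S j : Module.End ℂ N) * S i))
    (hγ : ∀ a : Fin r → ℤ, ⇑(γ a) ∘ η = ∏ i, q i ^ a i) :
    thinFam V S γ = weightFamily V η S := by
  ext1 n; ext1 h
  refine le_antisymm (iSup_le fun a => ?_) (weightFamily_le_iff.2 fun p v Y hY => ?_)
  · rintro _ ⟨v, rfl⟩
    have hw : ⇑h ∘ η / ⇑(h * γ a) ∘ η = (∏ i, q i ^ a i)⁻¹ := by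
      rw [← hγ a]
      exact div_mul_cancel_left (⇑h ∘ η) (⇑(γ a) ∘ η)
    exact singleTmul_mem_weightFamily (hw ▸ Sprod_mem_torusWeightSpace hrel a) v n
  · obtain rfl | hY0 := eq_or_ne Y 0
    · simp
    obtain ⟨a, ha, t, rfl⟩ := exists_eq_smul_Sprod_of_mem_torusWeightSpace hS hrel hY hY0
    have hw : ⇑p ∘ η = ⇑(h * γ a) ∘ η := by
      rw [← hγ a, div_eq_iff_eq_mul, eq_inv_mul_iff_mul_eq, mul_comm] at ha
      exact ha.symm
    obtain rfl : p = h * γ a :=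
      MonoidHom.eq_of_eqOn_dense hgen <| Set.forall_mem_range.2 fun j => congr_fun hw j
    rw [LinearMap.smul_apply, map_smul]
    exact Submodule.smul_mem _ t <| Submodule.mem_iSup_of_mem a ⟨v, rfl⟩

end ThinFam

section Averaging

theorem exists_isotypic_and_map_eq {K G W W' : Type*} [Field K] [Group G] [Finite G]
    [AddCommGroup W] [Module K W] [AddCommGroup W'] [Module K W']
    (hG : (Nat.card G : K) ≠ 0) (π : Representation K G W) (χ : G →* Kˣ) (f : W →ₗ[K] W') {w : W}
    (hw : ∀ σ, f (π σ w) = χ σ • f w) :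
    ∃ w', (∀ σ, π σ w' = χ σ • w') ∧ f w' = f w := by
  cases nonempty_fintype G
  refine ⟨(Nat.card G : K)⁻¹ • ∑ σ, (χ σ)⁻¹ • π σ w, fun τ => ?_, ?_⟩
  · have hsum : π τ (∑ σ, (χ σ)⁻¹ • π σ w) = χ τ • ∑ σ, (χ σ)⁻¹ • π σ w := by
      rw [map_sum, Finset.smul_sum]
      refine Fintype.sum_equiv (Equiv.mulLeft τ) _ _ fun σ => ?_
      rw [LinearMap.map_smul_of_tower, Equiv.coe_mulLeft, map_mul, map_mul, Module.End.mul_apply,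
        mul_inv, smul_smul, mul_inv_cancel_left]
    rw [map_smul, hsum, smul_comm]
  · have hσ : ∀ σ, f ((χ σ)⁻¹ • π σ w) = f w := fun σ => by
      rw [LinearMap.map_smul_of_tower, hw, inv_smul_smul]
    rw [map_smul, map_sum, Finset.sum_congr rfl fun σ _ => hσ σ, Finset.sum_const,
      Finset.card_univ, ← Nat.card_eq_fintype_card, ← Nat.cast_smul_eq_nsmul K, inv_smul_smul₀ hG]

end Averaging

section Grading

variable {K G A M ι : Type*} [Field K] [Group G] [Finite G] [Ring A] [Algebra K A]
  [AddCommGroup M] [Module K M] {η : ι → G} {ρ : A →ₐ[K] Module.End K M} {Φ : G →* A ≃ₐ[K] A}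
  {T : ι → Module.End K M}

theorem map_apply_eq_smul_of_mem_conjWeightSpace
    (hgen : Subgroup.closure (Set.range η) = ⊤) (hTsurj : ∀ j, Function.Surjective (T j))
    (hT : ∀ j a, T j ∘ₗ ρ a = ρ (Φ (η j) a) ∘ₗ T j) {h : G →* Kˣ} {a : A}
    (ha : ρ a ∈ conjWeightSpace T (⇑h ∘ η)) (σ : G) : ρ (Φ σ a) = (h σ : K) • ρ a := by
  have hσ : σ ∈ Submonoid.closure (Set.range η) := by
    rw [← Subgroup.closure_toSubmonoid_of_finite, hgen]
    exact Subgroup.mem_top σ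
  induction hσ using Submonoid.closure_induction_left with
  | one => simp
  | mul_left x hx y _ ih =>
    obtain ⟨j, rfl⟩ := hx
    refine (LinearMap.cancel_right (hTsurj j)).1 ?_
    calc ρ (Φ (η j * y) a) ∘ₗ T j = T j ∘ₗ ρ (Φ y a) := by
          rw [hT j, map_mul, AlgEquiv.mul_apply]
      _ = (h y : K) • T j * ρ a := by rw [ih, LinearMap.comp_smul]; rfl
      _ = ((h (η j * y) : K) • ρ a) ∘ₗ T j := by
          rw [smul_mul_assoc, ha j, smul_smul, map_mul, Units.val_mul, mul_comm]; rfl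

theorem map_eq_conjWeightSpace (hG : (Nat.card G : K) ≠ 0) (hρ : Function.Surjective ρ)
    {𝒜 : (G →* Kˣ) → Submodule K A}
    (h𝒜 : ∀ h a, a ∈ 𝒜 h ↔ ∀ σ, Φ σ a = (h σ : K) • a)
    (hgen : Subgroup.closure (Set.range η) = ⊤) (hTsurj : ∀ j, Function.Surjective (T j))
    (hT : ∀ j a, T j ∘ₗ ρ a = ρ (Φ (η j) a) ∘ₗ T j) (h : G →* Kˣ) :
    (𝒜 h).map ρ.toLinearMap = conjWeightSpace T (⇑h ∘ η) := by
  refine le_antisymm ?_ fun X hX => ?_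
  · rintro _ ⟨a, ha, rfl⟩ j
    have hj := hT j a
    rw [(h𝒜 h a).1 ha, map_smul] at hj
    exact hj
  · obtain ⟨a, rfl⟩ := hρ X
    obtain ⟨b, hb, hba⟩ := exists_isotypic_and_map_eq hG
      ((AlgEquiv.toLinearMapHom K A).comp Φ) h ρ.toLinearMap
      (map_apply_eq_smul_of_mem_conjWeightSpace hgen hTsurj hT hX)
    exact ⟨b, (h𝒜 h b).2 hb, hba⟩

end Grading

section CoveringMap

variable {G A M : Type*} [CommGroup G] [Ring A] [Algebra ℂ A] [AddCommGroup M] [Module ℂ M]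
  {ρ : A →ₐ[ℂ] Module.End ℂ M} {𝒜 : (G →* ℂˣ) → Submodule ℂ A}

theorem isCoveringRho_iff_map {C : (G →* ℂˣ) → Submodule ℂ M} :
    IsCoveringRho 𝒜 ρ C ↔
      IsCoveringRho (fun h => (𝒜 h).map ρ.toLinearMap) (AlgHom.id ℂ (Module.End ℂ M)) C := by
  simp only [IsCoveringRho, Submodule.mem_map, AlgHom.toLinearMap_apply, forall_exists_index,
    and_imp, forall_apply_eq_imp_iff₂, AlgHom.id_apply]

theorem isThinCoveringRho_iff_map {C : (G →* ℂˣ) → Submodule ℂ M} :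
    IsThinCoveringRho 𝒜 ρ C ↔
      IsThinCoveringRho (fun h => (𝒜 h).map ρ.toLinearMap) (AlgHom.id ℂ (Module.End ℂ M)) C := by
  simp only [IsThinCoveringRho, isCoveringRho_iff_map (𝒜 := 𝒜) (ρ := ρ)]

end CoveringMap

/-- Theorem 3.9 (Billig–Lau): let `M` be a finite-dimensional simple module
over a ℂ-algebra `A` (action `ρ`), `Ĥ` a finite abelian group of automorphisms
of `A` generated by `η₁, …, η_r` and implemented on `M` by operators `T_j`
generating a cyclotomic quantum torus, with isotypic decomposition
`M = ⊕_{h∈H} N ⊗ V^h` (`N` a simple torus module, `H = Hom(Ĥ,ℂ*)`, `T_j`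
acting as `S_j ⊗ h(η_j)`), and `γ : ℤ^r → H` the associated homomorphism.
Then, up to equivalence, the thin `H`-coverings of `M` are parametrized by
one-dimensional subspaces of `N`: for every nonzero `n ∈ N` the family
`M_h = Σ_{a∈ℤ^r} T^a(n) ⊗ V^{h·γ(a)}` is a thin `H`-covering of `M`; every
thin `H`-covering of `M` is equivalent to one of this form; and the covering
attached to `n` depends only on the line `ℂn`. -/
theorem thin_H_coverings_classification
    {Hhat : Type*} [CommGroup Hhat] [Finite Hhat] [DecidableEq (Hhat →* ℂˣ)]
    {N : Type*} [AddCommGroup N] [Module ℂ N] [FiniteDimensional ℂ N]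
    (V : (Hhat →* ℂˣ) → Type*) [∀ p, AddCommGroup (V p)] [∀ p, Module ℂ (V p)]
    [∀ p, FiniteDimensional ℂ (V p)]
    {r : ℕ} (η : Fin r → Hhat) (hgen : Subgroup.closure (Set.range η) = ⊤)
    (S : Fin r → N ≃ₗ[ℂ] N) (q : Fin r → Fin r → ℂˣ)
    (hq1 : ∀ i, q i i = 1) (hqinv : ∀ i j, q i j = (q j i)⁻¹)
    (hqroot : ∀ i j, ∃ m : ℕ, 0 < m ∧ q i j ^ m = 1)
    (hrel : ∀ i j, ((S i : Module.End ℂ N) * S j) =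
        (q i j : ℂ) • ((S j : Module.End ℂ N) * S i))
    (hNsimple : Nontrivial N ∧
      ∀ W : Submodule ℂ N, (∀ i, ∀ u ∈ W, S i u ∈ W) → W = ⊥ ∨ W = ⊤)
    (γ : (Fin r → ℤ) → (Hhat →* ℂˣ))
    (hγadd : ∀ a b : Fin r → ℤ, γ (a + b) = γ a * γ b)
    (hγdef : ∀ a b : Fin r → ℤ, γ a (∏ i, η i ^ b i) = ∏ i, ∏ j, q i j ^ (a i * b j))
    {A : Type*} [Ring A] [Algebra ℂ A]
    (ρ : A →ₐ[ℂ] Module.End ℂ (⨁ p : Hhat →* ℂˣ, N ⊗[ℂ] V p))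
    (Φ : Hhat →* A ≃ₐ[ℂ] A)
    (𝒜 : (Hhat →* ℂˣ) → Submodule ℂ A)
    (h𝒜 : ∀ (h : Hhat →* ℂˣ) (a : A), a ∈ 𝒜 h ↔ ∀ σ : Hhat, Φ σ a = (h σ : ℂ) • a)
    (hT : ∀ (j : Fin r) (a : A),
      (torusOp V η S j).comp (ρ a) = (ρ (Φ (η j) a)).comp (torusOp V η S j))
    (hMsimple : Nontrivial (⨁ p : Hhat →* ℂˣ, N ⊗[ℂ] V p) ∧
      ∀ W : Submodule ℂ (⨁ p : Hhat →* ℂˣ, N ⊗[ℂ] V p),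
        (∀ a : A, ∀ m ∈ W, ρ a m ∈ W) → W = ⊥ ∨ W = ⊤) :
    (∀ n : N, n ≠ 0 → IsThinCoveringRho 𝒜 ρ (thinFam V S γ n)) ∧
    (∀ C : (Hhat →* ℂˣ) → Submodule ℂ (⨁ p : Hhat →* ℂˣ, N ⊗[ℂ] V p),
      IsThinCoveringRho 𝒜 ρ C →
        ∃ n : N, n ≠ 0 ∧ ∃ k : Hhat →* ℂˣ, ∀ h, C (h * k) = thinFam V S γ n h) ∧
    (∀ n n' : N, n ≠ 0 → n' ≠ 0 →
      Submodule.span ℂ {n} = Submodule.span ℂ {n'} →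
        ∀ h, thinFam V S γ n h = thinFam V S γ n' h) := by
  have := hMsimple.1
  have := Fintype.ofFinite (Hhat →* ℂˣ)
  have hγ := character_comp_generators hγdef
  have hspan := iSup_torusWeightSpace_character_eq_top hNsimple hrel hγ
  have hgrading := map_eq_conjWeightSpace (Nat.cast_ne_zero.2 Nat.card_pos.ne')
    (IsIrreducibleFamily.algHom_surjective hMsimple) h𝒜 hgen torusOp_surjective hT
  simp only [isThinCoveringRho_iff_map (𝒜 := 𝒜) (ρ := ρ), hgrading,
    thinFam_eq_weightFamily hgen hNsimple hrel hγ]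
  exact ⟨fun n hn => isThinTorusCovering_weightFamily hNsimple hspan hn,
    fun C hC => IsThinTorusCovering.exists_eq_weightFamily hNsimple hspan hC,
    fun n n' _ _ hnn' => weightFamily_eq_of_span_eq hnn'⟩
end
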